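/- Fix β > 0, d ≥ 1, s ≥ 0 and u ≥ ℓ ≥ 0, and suppose f ∈ A(s, ℓ, u). Then for all R > 0 and all p ≥ 2·p_M(s, ℓ) there exists a constant L = L(p, R) > 0 such that for all probability measures μ, ν ∈ P_{p,R}(ℝ^d), ‖√C_β(μ) − √C_β(ν)‖_F ≤ L · W_p(μ, ν). -/

import Mathlib

open MeasureTheory ENNReal
open scoped NNReal

noncomputable section

/-- Euclidean space `ℝ^d`. -/
abbrev Rd (d : ℕ) := EuclideanSpace ℝ (Fin d)

/-- The weight function `x ↦ exp (-β f x)`. -/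
def wFn (β : ℝ) {d : ℕ} (f : Rd d → ℝ) (x : Rd d) : ℝ := Real.exp (-β * f x)

/-- The weighted mean `M_β(μ) = (∫ x e^{-β f x} dμ) / (∫ e^{-β f x} dμ)`. -/
def wMean (β : ℝ) {d : ℕ} (f : Rd d → ℝ) (μ : Measure (Rd d)) : Rd d :=
  (∫ x, wFn β f x ∂μ)⁻¹ • ∫ x, wFn β f x • x ∂μ

/-- The weighted covariance `C_β(μ)`, a `d × d` matrix. -/
def wCov (β : ℝ) {d : ℕ} (f : Rd d → ℝ) (μ : Measure (Rd d)) :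
    Matrix (Fin d) (Fin d) ℝ := fun i j =>
  (∫ x, wFn β f x ∂μ)⁻¹ *
    ∫ x, wFn β f x * ((x i - wMean β f μ i) * (x j - wMean β f μ j)) ∂μ

/-- Frobenius norm of a matrix. -/
def frobNorm {m n : ℕ} (A : Matrix (Fin m) (Fin n) ℝ) : ℝ :=
  Real.sqrt (∑ i, ∑ j, (A i j) ^ 2)

/-- `S` is the (unique) positive semidefinite square root of `A`. -/
def IsPSDSqrt {d : ℕ} (S A : Matrix (Fin d) (Fin d) ℝ) : Prop :=
  S.PosSemidef ∧ S * S = A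

/-- `μ ∈ P_{p,R}`: the `p`-th moment of `μ` is bounded, `(∫ |x|^p dμ)^{1/p} ≤ R`. -/
def MomLE (p R : ℝ) {d : ℕ} (μ : Measure (Rd d)) : Prop :=
  ∫⁻ x, (‖x‖₊ : ℝ≥0∞) ^ p ∂μ ≤ ENNReal.ofReal (R ^ p)

/-- `μ ∈ P_p`: the `p`-th moment of `μ` is finite. -/
def MomFin (p : ℝ) {d : ℕ} (μ : Measure (Rd d)) : Prop :=
  ∫⁻ x, (‖x‖₊ : ℝ≥0∞) ^ p ∂μ < ⊤

/-- The Wasserstein-`p` distance between two probability measures on `ℝ^d`: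
the infimum over couplings `π` of `μ` and `ν` of `(∬ |x - y|^p dπ)^{1/p}`. -/
def Wp (p : ℝ) {d : ℕ} (μ ν : Measure (Rd d)) : ℝ :=
  (sInf {c : ℝ≥0∞ | ∃ π : Measure (Rd d × Rd d),
      π.map Prod.fst = μ ∧ π.map Prod.snd = ν ∧
      c = (∫⁻ z, (‖z.1 - z.2‖₊ : ℝ≥0∞) ^ p ∂π) ^ (1 / p)}).toReal

/-- `f_* = inf f`. -/
def fStar {d : ℕ} (f : Rd d → ℝ) : ℝ := sInf (Set.range f)

/-- The class `A(s, ℓ, u)` of objective functions: `f` is bounded from below,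
locally Lipschitz with growth exponent `s`, and `f - inf f` grows at least like
`|x|^ℓ` and at most like `|x|^u`. -/
structure ClassA {d : ℕ} (s ℓ u : ℝ) (f : Rd d → ℝ) : Prop where
  bddBelow : BddBelow (Set.range f)
  lip : ∃ Lf > 0, ∀ x y : Rd d, |f x - f y| ≤ Lf * (1 + ‖x‖ + ‖y‖) ^ s * ‖x - y‖
  growth_lower : ∃ cl > 0, ∃ Cl > 0, ∀ x : Rd d, cl * ‖x‖ ^ ℓ - Cl ≤ f x - fStar f
  growth_upper : ∃ cu > 0, ∃ Cu > 0, ∀ x : Rd d, f x - fStar f ≤ cu * ‖x‖ ^ u + Cu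

/-- `p_M(s, ℓ) = s + 2` if `ℓ = 0`, and `1` if `ℓ > 0`. -/
def pM (s ℓ : ℝ) : ℝ := if ℓ = 0 then s + 2 else 1

/-- `p_C(s, ℓ) = s + 3` if `ℓ = 0`, and `1` if `ℓ > 0`. -/
def pC (s ℓ : ℝ) : ℝ := if ℓ = 0 then s + 3 else 1

/-!
Put `w = exp (-β f)`. In `L²(μ)` the weighted mean `M_β(μ)ᵢ` is the coefficient of the orthogonal
projection of `√w xᵢ` onto `√w`, so that `C_β(μ)` is the Gram matrix of the residuals of the `√w xᵢ`
divided by `‖√w‖`. Hence `√C_β(μ)` is the absolute value of an operator `ℝ^d → L²`, and the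
Araki–Yamagami inequality `‖|A| - |B|‖_HS ≤ √2 ‖A - B‖_HS` bounds `‖√C_β(μ) - √C_β(ν)‖_F` by the
distance between the two families of residuals, once a coupling has moved both into the same `L²`.
The residuals depend on `√w` and `√w xᵢ` in a Lipschitz way as long as `‖√w‖` stays away from `0`,
which the moment bound ensures. Finally `√w` and `√w x` are Lipschitz with a constant growing at
most like the power `p / 2 - 1` of the norm, and Hölder's inequality turns this into an `L²` bound
by the `L^p` cost of the coupling.
-/

section HilbertSchmidt

variable {ι κ V E : Type*} [Fintype ι] [Fintype κ]
  [NormedAddCommGroup V] [InnerProductSpace ℝ V] [NormedAddCommGroup E] [InnerProductSpace ℝ E]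

theorem sum_inner_map_map_eq_sum_sum (e : OrthonormalBasis ι ℝ V) (f : OrthonormalBasis κ ℝ V)
    (A B : V →ₗ[ℝ] E) :
    ∑ i, inner ℝ (A (e i)) (B (e i)) =
      ∑ i, ∑ j, inner ℝ (e i) (f j) * inner ℝ (A (e i)) (B (f j)) := by
  refine Finset.sum_congr rfl fun i _ => ?_
  conv_lhs => enter [3]; rw [← f.sum_repr' (e i)]
  simp only [map_sum, map_smul, inner_sum, real_inner_smul_right, real_inner_comm (e i)]

theorem sum_inner_map_map_eq (e : OrthonormalBasis ι ℝ V) (f : OrthonormalBasis κ ℝ V)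
    (A B : V →ₗ[ℝ] E) :
    ∑ i, inner ℝ (A (e i)) (B (e i)) = ∑ j, inner ℝ (A (f j)) (B (f j)) := by
  rw [sum_inner_map_map_eq_sum_sum e f, Finset.sum_comm]
  refine Finset.sum_congr rfl fun j _ => ?_
  conv_rhs => enter [2]; rw [← e.sum_repr' (f j)]
  simp only [map_sum, map_smul, sum_inner, real_inner_smul_left]

theorem sum_sq_norm_map_sub_map {τ : Type*} [Fintype τ] (ε : OrthonormalBasis τ ℝ V)
    (e : OrthonormalBasis ι ℝ V) (f : OrthonormalBasis κ ℝ V) (A B : V →ₗ[ℝ] E) :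
    ∑ k, ‖A (ε k) - B (ε k)‖ ^ 2 = ∑ i, ‖A (e i)‖ ^ 2 + ∑ j, ‖B (f j)‖ ^ 2 -
      2 * ∑ i, ∑ j, inner ℝ (e i) (f j) * inner ℝ (A (e i)) (B (f j)) := by
  simp only [norm_sub_sq_real]
  simp only [← real_inner_self_eq_norm_sq, Finset.sum_sub_distrib,
    Finset.sum_add_distrib, ← Finset.mul_sum, sum_inner_map_map_eq ε e A A,
    sum_inner_map_map_eq ε f B B, sum_inner_map_map_eq ε e A B,
    sum_inner_map_map_eq_sum_sum e f A B]
  ring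

theorem sum_sq_inner_le_of_pairwise_orthogonal {u : ι → E}
    (orthogonal : Pairwise fun i j => inner ℝ (u i) (u j) = 0) (norm_le : ∀ i, ‖u i‖ ≤ 1) (w : E) :
    ∑ i, inner ℝ (u i) w ^ 2 ≤ ‖w‖ ^ 2 := by
  set P := ∑ i, inner ℝ (u i) w • u i
  have inner_P : inner ℝ w P = ∑ i, inner ℝ (u i) w ^ 2 := by
    simp only [P, inner_sum, real_inner_smul_right, real_inner_comm w, sq]
  have norm_P : ‖P‖ ^ 2 ≤ ∑ i, inner ℝ (u i) w ^ 2 := by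
    rw [← real_inner_self_eq_norm_sq, sum_inner]
    refine Finset.sum_le_sum fun i _ => ?_
    rw [inner_sum, Finset.sum_eq_single i (fun j _ hj => by
      rw [real_inner_smul_left, real_inner_smul_right, orthogonal hj.symm, mul_zero, mul_zero])
      (by simp), real_inner_smul_left, real_inner_smul_right, real_inner_self_eq_norm_sq]
    nlinarith [sq_nonneg (inner ℝ (u i) w), pow_le_one₀ (n := 2) (norm_nonneg (u i)) (norm_le i)]
  have := norm_sub_sq_real w P
  linarith [sq_nonneg ‖w - P‖]

theorem norm_map_eigenvector {S : V →ₗ[ℝ] V} {A : V →ₗ[ℝ] E}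
    (isometric : ∀ x y, inner ℝ (A x) (A y) = inner ℝ (S x) (S y))
    (e : OrthonormalBasis ι ℝ V) (a : ι → ℝ) (eigen : ∀ i, S (e i) = a i • e i) (i : ι) :
    ‖A (e i)‖ = |a i| := by
  rw [← sq_eq_sq₀ (norm_nonneg _) (abs_nonneg _), ← real_inner_self_eq_norm_sq, isometric,
    real_inner_self_eq_norm_sq, eigen, norm_smul, e.norm_eq_one, mul_one, Real.norm_eq_abs]

theorem exists_orthogonal_map_eigenbasis {S : V →ₗ[ℝ] V} {A : V →ₗ[ℝ] E}
    (isometric : ∀ x y, inner ℝ (A x) (A y) = inner ℝ (S x) (S y))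
    (e : OrthonormalBasis ι ℝ V) (a : ι → ℝ) (eigen : ∀ i, S (e i) = a i • e i) :
    ∃ u : ι → E, (Pairwise fun i j => inner ℝ (u i) (u j) = 0) ∧ (∀ i, ‖u i‖ ≤ 1) ∧
      ∀ i, A (e i) = a i • u i := by
  have norm_map := norm_map_eigenvector isometric e a eigen
  refine ⟨fun i => (a i)⁻¹ • A (e i), fun i j hij => ?_, fun i => ?_, fun i => ?_⟩
  · simp only [real_inner_smul_left, real_inner_smul_right, isometric, eigen,
      e.inner_eq_zero hij, mul_zero]
  · rw [norm_smul, norm_map, norm_inv, Real.norm_eq_abs]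
    exact inv_mul_le_one
  · rcases eq_or_ne (a i) 0 with ha | ha
    · rw [ha, zero_smul, ← norm_eq_zero, norm_map, ha, abs_zero]
    · rw [smul_inv_smul₀ ha]

theorem sum_sum_mul_sq_inner_le {u : ι → E} {v : κ → E}
    (orthogonal : Pairwise fun i j => inner ℝ (u i) (u j) = 0) (norm_u : ∀ i, ‖u i‖ ≤ 1)
    (norm_v : ∀ j, ‖v j‖ ≤ 1) (b : κ → ℝ) :
    ∑ i, ∑ j, b j ^ 2 * inner ℝ (u i) (v j) ^ 2 ≤ ∑ j, b j ^ 2 := by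
  rw [Finset.sum_comm]
  refine Finset.sum_le_sum fun j _ => ?_
  rw [← Finset.mul_sum]
  exact mul_le_of_le_one_right (sq_nonneg _)
    ((sum_sq_inner_le_of_pairwise_orthogonal orthogonal norm_u (v j)).trans
      (pow_le_one₀ (norm_nonneg _) (norm_v j)))

/- The Araki–Yamagami inequality: with `c = ⟪e i, f j⟫` and `t = ⟪u i, v j⟫`, the difference of the
two sides is at least the sum of the nonnegative terms `(a - b)² t² + 2 a b (c - t)²`. -/
theorem sum_sq_norm_sub_le_of_isPositive [FiniteDimensional ℝ V] {S T : V →ₗ[ℝ] V}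
    (hS : S.IsPositive) (hT : T.IsPositive) {A B : V →ₗ[ℝ] E}
    (hA : ∀ x y, inner ℝ (A x) (A y) = inner ℝ (S x) (S y))
    (hB : ∀ x y, inner ℝ (B x) (B y) = inner ℝ (T x) (T y)) (ε : OrthonormalBasis ι ℝ V) :
    ∑ k, ‖S (ε k) - T (ε k)‖ ^ 2 ≤ 2 * ∑ k, ‖A (ε k) - B (ε k)‖ ^ 2 := by
  set e := hS.isSymmetric.eigenvectorBasis rfl
  set f := hT.isSymmetric.eigenvectorBasis rfl
  set a := hS.isSymmetric.eigenvalues rfl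
  set b := hT.isSymmetric.eigenvalues rfl
  have Se (i) : S (e i) = a i • e i := hS.isSymmetric.apply_eigenvectorBasis rfl i
  have Tf (j) : T (f j) = b j • f j := hT.isSymmetric.apply_eigenvectorBasis rfl j
  have ha (i) : 0 ≤ a i := hS.nonneg_eigenvalues rfl i
  have hb (j) : 0 ≤ b j := hT.nonneg_eigenvalues rfl j
  obtain ⟨u, u_orth, u_le, Ae⟩ := exists_orthogonal_map_eigenbasis hA e a Se
  obtain ⟨v, v_orth, v_le, Bf⟩ := exists_orthogonal_map_eigenbasis hB f b Tf
  have bessel_u := sum_sum_mul_sq_inner_le u_orth u_le v_le b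
  have bessel_v := sum_sum_mul_sq_inner_le v_orth v_le u_le a
  rw [Finset.sum_comm] at bessel_v
  have nonneg (i) (j) : 0 ≤ a i ^ 2 * inner ℝ (v j) (u i) ^ 2 + b j ^ 2 * inner ℝ (u i) (v j) ^ 2
      + 2 * (inner ℝ (e i) (f j) * (b j * (a i * inner ℝ (e i) (f j))))
      - 4 * (inner ℝ (e i) (f j) * (b j * (a i * inner ℝ (u i) (v j)))) := by
    rw [real_inner_comm (u i) (v j)]
    linarith [sq_nonneg ((a i - b j) * inner ℝ (u i) (v j)), mul_nonneg (mul_nonneg (ha i) (hb j))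
      (sq_nonneg (inner ℝ (e i) (f j) - inner ℝ (u i) (v j)))]
  have nonneg_sum := Finset.sum_nonneg fun i (_ : i ∈ Finset.univ) =>
    Finset.sum_nonneg fun j (_ : j ∈ Finset.univ) => nonneg i j
  simp only [Finset.sum_add_distrib, Finset.sum_sub_distrib] at nonneg_sum
  simp only [← Finset.mul_sum _ _ (2 : ℝ), ← Finset.mul_sum _ _ (4 : ℝ)] at nonneg_sum
  rw [sum_sq_norm_map_sub_map ε e f S T, sum_sq_norm_map_sub_map ε e f A B]
  simp only [norm_map_eigenvector (fun _ _ => rfl) e a Se, norm_map_eigenvector hA e a Se,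
    norm_map_eigenvector (fun _ _ => rfl) f b Tf, norm_map_eigenvector hB f b Tf, sq_abs]
  simp only [Ae, Bf, Se, Tf, real_inner_smul_left, real_inner_smul_right]
  linarith

end HilbertSchmidt

section MatrixSqrt

variable {d : ℕ} {E : Type*} [NormedAddCommGroup E] [InnerProductSpace ℝ E]

theorem inner_map_map_eq_of_basis {ι V W : Type*} [NormedAddCommGroup V] [InnerProductSpace ℝ V]
    [NormedAddCommGroup W] [InnerProductSpace ℝ W] {A : V →ₗ[ℝ] E} {S : V →ₗ[ℝ] W}
    (b : Module.Basis ι ℝ V)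
    (h : ∀ i j, inner ℝ (A (b i)) (A (b j)) = inner ℝ (S (b i)) (S (b j))) (x y : V) :
    inner ℝ (A x) (A y) = inner ℝ (S x) (S y) := by
  have : (innerₗ E).compl₁₂ A A = (innerₗ W).compl₁₂ S S :=
    LinearMap.BilinForm.ext_basis b h
  exact LinearMap.congr_fun₂ this x y

theorem inner_toEuclideanLin_basisFun {S : Matrix (Fin d) (Fin d) ℝ} (hS : S.IsHermitian)
    (i j : Fin d) :
    inner ℝ (S.toEuclideanLin (EuclideanSpace.basisFun (Fin d) ℝ i))
      (S.toEuclideanLin (EuclideanSpace.basisFun (Fin d) ℝ j)) = (S * S) i j := by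
  rw [Matrix.isSymmetric_toEuclideanLin_iff.2 hS, ← LinearMap.comp_apply,
    ← Matrix.toLpLin_mul_same]
  simp [-Matrix.toLpLin_mul_same, Matrix.toLpLin_apply, PiLp.inner_apply]

theorem frobNorm_sq_eq_sum_sq_norm (S : Matrix (Fin d) (Fin d) ℝ) :
    frobNorm S ^ 2 = ∑ k, ‖S.toEuclideanLin (EuclideanSpace.basisFun (Fin d) ℝ k)‖ ^ 2 := by
  rw [frobNorm, Real.sq_sqrt (by positivity), Finset.sum_comm]
  simp [EuclideanSpace.norm_sq_eq, Matrix.toLpLin_apply]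

theorem frobNorm_sub_sq_le_of_mul_self_eq_gram {S T : Matrix (Fin d) (Fin d) ℝ} {F G : Fin d → E}
    (hS : S.PosSemidef) (hT : T.PosSemidef)
    (hF : S * S = Matrix.gram ℝ F) (hG : T * T = Matrix.gram ℝ G) :
    frobNorm (S - T) ^ 2 ≤ 2 * ∑ i, ‖F i - G i‖ ^ 2 := by
  set ε := EuclideanSpace.basisFun (Fin d) ℝ
  have map_basis (H : Fin d → E) (i : Fin d) : ε.toBasis.constr ℝ H (ε i) = H i := by
    rw [← ε.coe_toBasis, Module.Basis.constr_basis]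
  have isometric {Q : Matrix (Fin d) (Fin d) ℝ} {H : Fin d → E} (hQ : Q.IsHermitian)
      (hH : Q * Q = Matrix.gram ℝ H) := inner_map_map_eq_of_basis (A := ε.toBasis.constr ℝ H)
    (S := Q.toEuclideanLin) ε.toBasis fun i j => by
      rw [ε.coe_toBasis, map_basis, map_basis, inner_toEuclideanLin_basisFun hQ, hH,
        Matrix.gram_apply]
  have key := sum_sq_norm_sub_le_of_isPositive (Matrix.isPositive_toEuclideanLin_iff.2 hS)
    (Matrix.isPositive_toEuclideanLin_iff.2 hT) (isometric hS.isHermitian hF)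
    (isometric hT.isHermitian hG) ε
  simp only [map_basis, ← LinearMap.sub_apply, ← map_sub] at key
  rwa [frobNorm_sq_eq_sum_sq_norm]

theorem frobNorm_sub_le_of_mul_self_eq_gram {S T : Matrix (Fin d) (Fin d) ℝ} {F G : Fin d → E}
    (hS : S.PosSemidef) (hT : T.PosSemidef)
    (hF : S * S = Matrix.gram ℝ F) (hG : T * T = Matrix.gram ℝ G) {δ : ℝ}
    (hδ : 0 ≤ δ) (h : ∀ i, ‖F i - G i‖ ≤ δ) : frobNorm (S - T) ≤ √(2 * d) * δ := by
  rw [← Real.sqrt_sq hδ, ← Real.sqrt_mul (by positivity)]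
  refine Real.le_sqrt_of_sq_le ((frobNorm_sub_sq_le_of_mul_self_eq_gram hS hT hF hG).trans ?_)
  calc 2 * ∑ i, ‖F i - G i‖ ^ 2 ≤ 2 * ∑ _i : Fin d, δ ^ 2 := by gcongr with i; exact h i
    _ = 2 * d * δ ^ 2 := by simp [mul_assoc]

end MatrixSqrt

section StandardizedResidual

open NormedSpace (normalize)

variable {V W : Type*} [NormedAddCommGroup V] [InnerProductSpace ℝ V]
  [NormedAddCommGroup W] [InnerProductSpace ℝ W]

/-- The component of `G` orthogonal to `H`, divided by the norm of `H`. With `H = √w` and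
`G = √w · xᵢ` in `L²(μ)` this is the vector `√w (xᵢ - mᵢ) / ‖√w‖`, where `m` is the mean for the
weight `w`, so that weighted covariances are Gram matrices of such vectors. -/
def standardizedResidual (H G : V) : V := ‖H‖⁻¹ • (ℝ ∙ H)ᗮ.starProjection G

theorem standardizedResidual_eq (H G : V) :
    standardizedResidual H G = ‖H‖⁻¹ • (G - (inner ℝ H G / ‖H‖ ^ 2) • H) := by
  rw [standardizedResidual, Submodule.starProjection_orthogonal_val,
    Submodule.starProjection_singleton]
  rfl

theorem map_standardizedResidual (φ : V →ₗᵢ[ℝ] W) (H G : V) :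
    φ (standardizedResidual H G) = standardizedResidual (φ H) (φ G) := by
  simp only [standardizedResidual_eq, map_smul, map_sub, φ.norm_map, φ.inner_map_map]

theorem norm_inv_norm_smul_sub_inv_norm_smul_le {c : ℝ} (hc : 0 < c) {H₁ H₂ : V}
    (h₁ : c ≤ ‖H₁‖) (h₂ : H₂ ≠ 0) (v₁ v₂ : V) :
    ‖‖H₁‖⁻¹ • v₁ - ‖H₂‖⁻¹ • v₂‖ ≤ c⁻¹ * (‖v₁ - v₂‖ + ‖v₂‖ / ‖H₂‖ * ‖H₁ - H₂‖) := by
  have norm_H₁ : ‖H₁‖ ≠ 0 := (hc.trans_le h₁).ne'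
  have norm_H₂ : ‖H₂‖ ≠ 0 := norm_ne_zero_iff.2 h₂
  have decomposition : ‖H₁‖⁻¹ • v₁ - ‖H₂‖⁻¹ • v₂ =
      ‖H₁‖⁻¹ • ((v₁ - v₂) - ((‖H₁‖ - ‖H₂‖) / ‖H₂‖) • v₂) := by
    match_scalars <;> field_simp [norm_H₁, norm_H₂]
    ring
  rw [decomposition, norm_smul, norm_inv, norm_norm]
  gcongr
  calc _ ≤ ‖v₁ - v₂‖ + ‖((‖H₁‖ - ‖H₂‖) / ‖H₂‖) • v₂‖ := norm_sub_le _ _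
    _ = ‖v₁ - v₂‖ + ‖v₂‖ / ‖H₂‖ * |‖H₁‖ - ‖H₂‖| := by
      rw [norm_smul, norm_div, norm_norm, Real.norm_eq_abs]
      ring
    _ ≤ _ := by gcongr; exact abs_norm_sub_norm_le H₁ H₂

theorem norm_normalize_sub_normalize_le {c : ℝ} (hc : 0 < c) {H₁ H₂ : V}
    (h₁ : c ≤ ‖H₁‖) (h₂ : H₂ ≠ 0) : ‖normalize H₁ - normalize H₂‖ ≤ 2 * c⁻¹ * ‖H₁ - H₂‖ := by
  refine (norm_inv_norm_smul_sub_inv_norm_smul_le hc h₁ h₂ H₁ H₂).trans_eq ?_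
  rw [div_self (norm_ne_zero_iff.2 h₂)]
  ring

theorem norm_starProjection_singleton_sub_le (H₁ H₂ G : V) :
    ‖(ℝ ∙ H₁).starProjection G - (ℝ ∙ H₂).starProjection G‖ ≤
      2 * ‖normalize H₁ - normalize H₂‖ * ‖G‖ := by
  have norm_le_one (H : V) : ‖normalize H‖ ≤ 1 := by
    rw [NormedSpace.normalize, norm_smul, norm_inv, norm_norm]
    exact inv_mul_le_one
  have projection (H : V) :
      (ℝ ∙ H).starProjection G = inner ℝ (normalize H) G • normalize H := by
    rw [Submodule.starProjection_singleton, NormedSpace.normalize, real_inner_smul_left, smul_smul]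
    congr 1
    simp only [RCLike.ofReal_real_eq_id, id]
    ring
  have decomposition : inner ℝ (normalize H₁) G • normalize H₁ -
      inner ℝ (normalize H₂) G • normalize H₂ = inner ℝ (normalize H₁) G •
        (normalize H₁ - normalize H₂) + inner ℝ (normalize H₁ - normalize H₂) G • normalize H₂ := by
    rw [inner_sub_left]
    module
  rw [projection, projection, decomposition]
  calc _ ≤ ‖normalize H₁‖ * ‖G‖ * ‖normalize H₁ - normalize H₂‖ +
        ‖normalize H₁ - normalize H₂‖ * ‖G‖ * ‖normalize H₂‖ := by
        refine (norm_add_le _ _).trans ?_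
        rw [norm_smul, norm_smul]
        gcongr <;> exact norm_inner_le_norm _ _
    _ ≤ 1 * ‖G‖ * ‖normalize H₁ - normalize H₂‖ + ‖normalize H₁ - normalize H₂‖ * ‖G‖ * 1 := by
        gcongr <;> exact norm_le_one _
    _ = _ := by ring

theorem norm_standardizedResidual_sub_le {b c : ℝ} (hc : 0 < c) {H₁ H₂ : V}
    (h₁ : c ≤ ‖H₁‖) (h₂ : c ≤ ‖H₂‖) (G₁ : V) {G₂ : V} (hG₂ : ‖G₂‖ ≤ b) :
    ‖standardizedResidual H₁ G₁ - standardizedResidual H₂ G₂‖ ≤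
      c⁻¹ * (‖G₁ - G₂‖ + 5 * (b / c) * ‖H₁ - H₂‖) := by
  have H₂_ne_zero : H₂ ≠ 0 := norm_pos_iff.1 (hc.trans_le h₂)
  set P₁ := (ℝ ∙ H₁)ᗮ.starProjection
  set P₂ := (ℝ ∙ H₂)ᗮ.starProjection
  have normalized := norm_normalize_sub_normalize_le hc h₁ H₂_ne_zero
  have residual : ‖P₁ G₁ - P₂ G₂‖ ≤ ‖G₁ - G₂‖ + 4 * (b / c) * ‖H₁ - H₂‖ :=
    calc ‖P₁ G₁ - P₂ G₂‖ = ‖P₁ (G₁ - G₂) +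
          ((ℝ ∙ H₂).starProjection G₂ - (ℝ ∙ H₁).starProjection G₂)‖ := by
          simp only [P₁, P₂, map_sub, Submodule.starProjection_orthogonal_val]
          congr 1
          abel
      _ ≤ ‖G₁ - G₂‖ + 2 * (2 * c⁻¹ * ‖H₁ - H₂‖) * b := by
          refine (norm_add_le _ _).trans
            (add_le_add (Submodule.norm_starProjection_apply_le _ _) ?_)
          rw [norm_sub_rev]
          refine (norm_starProjection_singleton_sub_le H₁ H₂ G₂).trans ?_
          gcongr
      _ = _ := by ring
  calc _ ≤ c⁻¹ * (‖P₁ G₁ - P₂ G₂‖ + ‖P₂ G₂‖ / ‖H₂‖ * ‖H₁ - H₂‖) :=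
        norm_inv_norm_smul_sub_inv_norm_smul_le hc h₁ H₂_ne_zero _ _
    _ ≤ c⁻¹ * (‖G₁ - G₂‖ + 4 * (b / c) * ‖H₁ - H₂‖ + b / c * ‖H₁ - H₂‖) := by
        gcongr
        · exact (norm_nonneg G₂).trans hG₂
        · exact (Submodule.norm_starProjection_apply_le _ _).trans hG₂
    _ = _ := by ring

end StandardizedResidual

section LipschitzGrowth

variable {E F : Type*} [NormedAddCommGroup E] [NormedAddCommGroup F]

/-- `φ` is locally Lipschitz, with a constant growing at most like the power `r` of the norm: the
condition imposed on objective functions in the class `A(s, ℓ, u)`, with the constant left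
implicit. -/
def HasLipschitzGrowth (r : ℝ) (φ : E → F) : Prop :=
  ∃ K ≥ 0, ∀ x y, ‖φ x - φ y‖ ≤ K * (1 + ‖x‖ + ‖y‖) ^ r * ‖x - y‖

theorem HasLipschitzGrowth.continuous {r : ℝ} {φ : E → F} (h : HasLipschitzGrowth r φ) :
    Continuous φ := by
  obtain ⟨K, -, hK⟩ := h
  refine continuous_iff_continuousAt.2 fun x => tendsto_iff_norm_sub_tendsto_zero.2 ?_
  have bound : Continuous fun y => K * (1 + ‖y‖ + ‖x‖) ^ r * ‖y - x‖ :=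
    (continuous_const.mul (Continuous.rpow_const (by fun_prop) fun y => Or.inl (by positivity))).mul
      (by fun_prop)
  exact squeeze_zero (fun _ => norm_nonneg _) (fun y => hK y x)
    (bound.tendsto' x 0 (by rw [sub_self, norm_zero, mul_zero]))

theorem HasLipschitzGrowth.mono {r r' : ℝ} {φ : E → F} (h : HasLipschitzGrowth r φ)
    (hr : r ≤ r') : HasLipschitzGrowth r' φ := by
  obtain ⟨K, hK, bound⟩ := h
  refine ⟨K, hK, fun x y => (bound x y).trans ?_⟩
  gcongr
  linarith [norm_nonneg x, norm_nonneg y]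

theorem HasLipschitzGrowth.of_norm_le {r : ℝ} {φ : E → F}
    (h : ∃ K ≥ 0, ∀ x y, ‖x‖ ≤ ‖y‖ → ‖φ x - φ y‖ ≤ K * (1 + ‖x‖ + ‖y‖) ^ r * ‖x - y‖) :
    HasLipschitzGrowth r φ := by
  obtain ⟨K, hK, bound⟩ := h
  refine ⟨K, hK, fun x y => ?_⟩
  rcases le_total ‖x‖ ‖y‖ with hxy | hyx
  · exact bound x y hxy
  · rw [norm_sub_rev, norm_sub_rev x, add_right_comm]
    exact bound y x hyx

theorem HasLipschitzGrowth.const_mul {r : ℝ} {φ : E → ℝ} (h : HasLipschitzGrowth r φ) (a : ℝ) :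
    HasLipschitzGrowth r fun x => a * φ x := by
  obtain ⟨K, hK, bound⟩ := h
  refine ⟨|a| * K, by positivity, fun x y => ?_⟩
  rw [← mul_sub, norm_mul, Real.norm_eq_abs, mul_assoc |a|, mul_assoc |a|]
  gcongr
  exact bound x y

theorem hasLipschitzGrowth_of_one_add_norm_mul_le {r : ℝ} {φ : E → ℝ}
    (h : ∃ K ≥ 0, ∀ x y, ‖x‖ ≤ ‖y‖ →
      (1 + ‖x‖) * |φ x - φ y| ≤ K * (1 + ‖x‖ + ‖y‖) ^ r * ‖x - y‖) :
    HasLipschitzGrowth r φ := by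
  obtain ⟨K, hK, bound⟩ := h
  refine .of_norm_le ⟨K, hK, fun x y hxy => le_trans ?_ (bound x y hxy)⟩
  exact le_mul_of_one_le_left (abs_nonneg _) (by linarith [norm_nonneg x])

theorem hasLipschitzGrowth_smul_of_one_add_norm_mul_le [NormedSpace ℝ E] {r M : ℝ} (hr : 0 ≤ r)
    {φ : E → ℝ} (bounded : ∀ x, |φ x| ≤ M)
    (h : ∃ K ≥ 0, ∀ x y, ‖x‖ ≤ ‖y‖ →
      (1 + ‖x‖) * |φ x - φ y| ≤ K * (1 + ‖x‖ + ‖y‖) ^ r * ‖x - y‖) :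
    HasLipschitzGrowth r fun x => φ x • x := by
  obtain ⟨K, hK, bound⟩ := h
  have hM : 0 ≤ M := (abs_nonneg _).trans (bounded 0)
  refine .of_norm_le ⟨K + M, by positivity, fun x y hxy => ?_⟩
  have one_le : 1 ≤ (1 + ‖x‖ + ‖y‖) ^ r :=
    Real.one_le_rpow (by linarith [norm_nonneg x, norm_nonneg y]) hr
  calc ‖φ x • x - φ y • y‖ = ‖(φ x - φ y) • x + φ y • (x - y)‖ := by congr 1; module
    _ ≤ ‖x‖ * |φ x - φ y| + |φ y| * ‖x - y‖ := by
      refine (norm_add_le _ _).trans_eq ?_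
      rw [norm_smul, norm_smul, Real.norm_eq_abs, Real.norm_eq_abs, mul_comm ‖x‖]
    _ ≤ (1 + ‖x‖) * |φ x - φ y| + M * (1 + ‖x‖ + ‖y‖) ^ r * ‖x - y‖ := by
      gcongr
      · linarith
      · exact (bounded y).trans (le_mul_of_one_le_right hM one_le)
    _ ≤ (K + M) * (1 + ‖x‖ + ‖y‖) ^ r * ‖x - y‖ := by linarith [bound x y hxy]

end LipschitzGrowth

section ExpWeight

variable {E : Type*} [NormedAddCommGroup E] {g : E → ℝ} {s ℓ c C D L M : ℝ}

theorem abs_exp_sub_exp_le {a b : ℝ} (ha : Real.exp a ≤ M) (hb : Real.exp b ≤ M) :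
    |Real.exp a - Real.exp b| ≤ M * |a - b| := by
  wlog hab : b ≤ a generalizing a b
  · rw [abs_sub_comm, abs_sub_comm a]
    exact this hb ha (le_of_not_ge hab)
  have tangent : Real.exp a * (1 - (a - b)) ≤ Real.exp b := by
    have := mul_le_mul_of_nonneg_left (Real.add_one_le_exp (b - a)) (Real.exp_nonneg a)
    rw [← Real.exp_add, add_sub_cancel] at this
    linarith
  rw [abs_of_nonneg (sub_nonneg.2 (Real.exp_le_exp.2 hab)), abs_of_nonneg (sub_nonneg.2 hab)]
  nlinarith

theorem exists_one_add_rpow_le_mul_exp (hℓ : 0 < ℓ) (hc : 0 < c) {r : ℝ} (hr : 0 ≤ r) :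
    ∃ K, ∀ t ≥ 0, (1 + t) ^ r ≤ K * Real.exp (c * t ^ ℓ) := by
  set c' := c / 2 ^ ℓ
  have hc' : 0 < c' := by positivity
  refine ⟨(r / ℓ / c') ^ (r / ℓ) * Real.exp c, fun t ht => ?_⟩
  have split : (1 + t) ^ ℓ ≤ 2 ^ ℓ * (1 + t ^ ℓ) := by
    calc (1 + t) ^ ℓ ≤ (2 * max 1 t) ^ ℓ := by
          gcongr
          linarith [le_max_left 1 t, le_max_right 1 t]
      _ ≤ 2 ^ ℓ * (1 + t ^ ℓ) := by
          rw [Real.mul_rpow (by norm_num) (by positivity)]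
          gcongr
          rcases max_cases 1 t with ⟨h, -⟩ | ⟨h, -⟩ <;> rw [h]
          · rw [Real.one_rpow]
            exact le_add_of_nonneg_right (by positivity)
          · exact le_add_of_nonneg_left zero_le_one
  have key := ProbabilityTheory.rpow_abs_le_mul_exp_abs ((1 + t) ^ ℓ) (p := r / ℓ) (by positivity)
    hc'.ne'
  rw [abs_of_pos hc', abs_of_nonneg (by positivity), ← Real.rpow_mul (by positivity),
    mul_div_cancel₀ _ hℓ.ne'] at key
  refine key.trans ?_
  rw [mul_assoc, ← Real.exp_add]
  gcongr
  calc c' * (1 + t) ^ ℓ ≤ c' * (2 ^ ℓ * (1 + t ^ ℓ)) := by gcongr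
    _ = c + c * t ^ ℓ := by simp only [c']; field_simp

theorem one_add_norm_mul_abs_exp_neg_sub_le_of_le
    (lip : ∀ x y, |g x - g y| ≤ L * (1 + ‖x‖ + ‖y‖) ^ s * ‖x - y‖)
    (bounded : ∀ x, Real.exp (-g x) ≤ M) (x y : E) :
    (1 + ‖x‖) * |Real.exp (-g x) - Real.exp (-g y)| ≤
      M * L * (1 + ‖x‖ + ‖y‖) ^ (s + 1) * ‖x - y‖ := by
  have hM : 0 ≤ M := (Real.exp_nonneg _).trans (bounded 0)
  calc _ ≤ (1 + ‖x‖ + ‖y‖) * (M * (L * (1 + ‖x‖ + ‖y‖) ^ s * ‖x - y‖)) := by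
        refine mul_le_mul (le_add_of_nonneg_right (norm_nonneg y)) ?_ (abs_nonneg _) (by positivity)
        refine (abs_exp_sub_exp_le (bounded x) (bounded y)).trans ?_
        rw [neg_sub_neg, abs_sub_comm]
        gcongr
        exact lip x y
    _ = _ := by
        rw [Real.rpow_add_one (by positivity)]
        ring

/- Either `‖y‖ ≤ 2 ‖x‖ + 1`, and the decay of `exp (-g)` absorbs the Lipschitz constant of `g` at
scale `‖x‖`, or `1 + ‖x‖ ≤ ‖x - y‖`, and boundedness of `exp (-g)` is enough. -/
theorem one_add_norm_mul_abs_exp_neg_sub_le_of_decay (hs : 0 ≤ s) (hL : 0 ≤ L)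
    (lip : ∀ x y, |g x - g y| ≤ L * (1 + ‖x‖ + ‖y‖) ^ s * ‖x - y‖)
    (decay : ∀ x, (1 + ‖x‖) ^ (s + 1) * Real.exp (-g x) ≤ D) {x y : E} (hxy : ‖x‖ ≤ ‖y‖) :
    (1 + ‖x‖) * |Real.exp (-g x) - Real.exp (-g y)| ≤ (D * L * 3 ^ s + D) * ‖x - y‖ := by
  have hD : 0 ≤ D := le_trans (by positivity) (decay x)
  have exp_le {z : E} (hz : ‖x‖ ≤ ‖z‖) : Real.exp (-g z) ≤ D / (1 + ‖x‖) ^ (s + 1) := by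
    rw [le_div_iff₀' (by positivity)]
    exact le_trans (by gcongr) (decay z)
  rcases le_total ‖y‖ (2 * ‖x‖ + 1) with near | far
  · calc _ ≤ (1 + ‖x‖) * (D / (1 + ‖x‖) ^ (s + 1) * |g x - g y|) := by
          gcongr
          refine (abs_exp_sub_exp_le (exp_le le_rfl) (exp_le hxy)).trans_eq ?_
          rw [neg_sub_neg, abs_sub_comm]
      _ ≤ (1 + ‖x‖) * (D / (1 + ‖x‖) ^ (s + 1) * (L * (3 * (1 + ‖x‖)) ^ s * ‖x - y‖)) := by
          gcongr
          refine (lip x y).trans ?_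
          gcongr
          linarith
      _ = D * L * 3 ^ s * ‖x - y‖ := by
          rw [Real.mul_rpow (by norm_num) (by positivity), Real.rpow_add_one (by positivity)]
          field_simp
      _ ≤ _ := by gcongr; linarith
  · have exp_le_D {z : E} (hz : ‖x‖ ≤ ‖z‖) : Real.exp (-g z) ≤ D :=
      (exp_le hz).trans (div_le_self hD (Real.one_le_rpow (by linarith [norm_nonneg x])
        (by linarith)))
    calc (1 + ‖x‖) * |Real.exp (-g x) - Real.exp (-g y)| ≤ ‖x - y‖ * D := by
          gcongr
          · linarith [norm_sub_norm_le y x, norm_sub_rev x y]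
          · rw [abs_le]
            constructor <;> linarith [exp_le_D le_rfl, exp_le_D hxy, Real.exp_nonneg (-g x),
              Real.exp_nonneg (-g y)]
      _ ≤ _ := by
          rw [mul_comm]
          gcongr
          exact le_add_of_nonneg_left (by positivity)

theorem exp_neg_le_of_coercive (hc : 0 ≤ c) (coercive : ∀ x, c * ‖x‖ ^ ℓ - C ≤ g x) (x : E) :
    Real.exp (-g x) ≤ Real.exp C := by
  have : 0 ≤ c * ‖x‖ ^ ℓ := by positivity
  exact Real.exp_le_exp.2 (by linarith [coercive x])

theorem exists_one_add_norm_rpow_mul_exp_neg_le (hℓ : 0 < ℓ) (hc : 0 < c)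
    (coercive : ∀ x, c * ‖x‖ ^ ℓ - C ≤ g x) {r : ℝ} (hr : 0 ≤ r) :
    ∃ D, ∀ x, (1 + ‖x‖) ^ r * Real.exp (-g x) ≤ D := by
  obtain ⟨K, hK⟩ := exists_one_add_rpow_le_mul_exp hℓ hc hr
  refine ⟨K * Real.exp C, fun x => ?_⟩
  calc (1 + ‖x‖) ^ r * Real.exp (-g x)
      ≤ K * Real.exp (c * ‖x‖ ^ ℓ) * Real.exp (-g x) := by gcongr; exact hK _ (norm_nonneg x)
    _ = K * Real.exp (c * ‖x‖ ^ ℓ - g x) := by rw [mul_assoc, ← Real.exp_add, sub_eq_add_neg]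
    _ ≤ K * Real.exp C := by
        gcongr
        · have := (by positivity : (0 : ℝ) ≤ (1 + 0) ^ r).trans (hK 0 le_rfl)
          exact nonneg_of_mul_nonneg_left this (Real.exp_pos _)
        · linarith [coercive x]

theorem exists_one_add_norm_mul_abs_exp_neg_sub_le (hs : 0 ≤ s) (hℓ : 0 ≤ ℓ) (hc : 0 < c)
    (lip : HasLipschitzGrowth s g) (coercive : ∀ x, c * ‖x‖ ^ ℓ - C ≤ g x) :
    ∃ K ≥ 0, ∀ x y, ‖x‖ ≤ ‖y‖ → (1 + ‖x‖) * |Real.exp (-g x) - Real.exp (-g y)| ≤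
      K * (1 + ‖x‖ + ‖y‖) ^ (pM s ℓ - 1) * ‖x - y‖ := by
  obtain ⟨L, hL, lip⟩ := lip
  rcases hℓ.eq_or_lt with rfl | hℓ
  · refine ⟨Real.exp C * L, by positivity, fun x y _ => ?_⟩
    rw [pM, if_pos rfl, show s + 2 - 1 = s + 1 by ring]
    exact one_add_norm_mul_abs_exp_neg_sub_le_of_le lip
      (exp_neg_le_of_coercive hc.le coercive) x y
  · obtain ⟨D, decay⟩ := exists_one_add_norm_rpow_mul_exp_neg_le hℓ hc coercive
      (by positivity : 0 ≤ s + 1)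
    have hD : 0 ≤ D := le_trans (by positivity) (decay 0)
    refine ⟨D * L * 3 ^ s + D, by positivity, fun x y hxy => ?_⟩
    rw [pM, if_neg hℓ.ne', sub_self, Real.rpow_zero, mul_one]
    exact one_add_norm_mul_abs_exp_neg_sub_le_of_decay hs hL lip decay hxy

end ExpWeight

section Coupling

theorem enorm_sub_le_of_lipschitz_growth {E F : Type*} [NormedAddCommGroup E]
    [NormedAddCommGroup F] {φ : E → F} {K r : ℝ} (hK : 0 ≤ K) (hr : 0 ≤ r)
    (lip : ∀ x y, ‖φ x - φ y‖ ≤ K * (1 + ‖x‖ + ‖y‖) ^ r * ‖x - y‖) (x y : E) :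
    ‖φ x - φ y‖ₑ ≤ ENNReal.ofReal K * (‖1 + ‖x‖ + ‖y‖‖ₑ ^ r * ‖x - y‖ₑ) := by
  rw [← ofReal_norm, ← ofReal_norm (x - y), Real.enorm_of_nonneg (by positivity),
    ENNReal.ofReal_rpow_of_nonneg (by positivity) hr, ← ENNReal.ofReal_mul (by positivity),
    ← ENNReal.ofReal_mul hK, ← mul_assoc]
  exact ENNReal.ofReal_le_ofReal (lip x y)

variable {E F : Type*} [NormedAddCommGroup E] [MeasurableSpace E] [BorelSpace E]
  [SecondCountableTopology E] [NormedAddCommGroup F] {μ ν : Measure E} {π : Measure (E × E)}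

theorem eLpNorm_ofReal_eq_lintegral {Ω : Type*} [MeasurableSpace Ω] {P : Measure Ω} {p : ℝ}
    (hp : 0 < p) (φ : Ω → F) :
    eLpNorm φ (ENNReal.ofReal p) P = (∫⁻ x, ‖φ x‖ₑ ^ p ∂P) ^ (1 / p) := by
  rw [eLpNorm_eq_lintegral_rpow_enorm_toReal (by simpa) ENNReal.ofReal_ne_top,
    ENNReal.toReal_ofReal hp.le]

theorem eLpNorm_fst_sub_snd_le {q a : ℝ≥0∞} (hq : 1 ≤ q) (h₁ : MeasurePreserving Prod.fst π μ)
    (h₂ : MeasurePreserving Prod.snd π ν) (hμ : eLpNorm id q μ ≤ a) (hν : eLpNorm id q ν ≤ a) :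
    eLpNorm (fun z => z.1 - z.2) q π ≤ 2 * a := by
  rw [← eLpNorm_comp_measurePreserving measurable_id.aestronglyMeasurable h₁] at hμ
  rw [← eLpNorm_comp_measurePreserving measurable_id.aestronglyMeasurable h₂] at hν
  rw [two_mul]
  exact (eLpNorm_sub_le measurable_fst.aestronglyMeasurable measurable_snd.aestronglyMeasurable
    hq).trans (add_le_add hμ hν)

theorem eLpNorm_one_add_norm_add_norm_le [IsProbabilityMeasure π] {q a : ℝ≥0∞} (hq : 1 ≤ q)
    (h₁ : MeasurePreserving Prod.fst π μ) (h₂ : MeasurePreserving Prod.snd π ν)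
    (hμ : eLpNorm id q μ ≤ a) (hν : eLpNorm id q ν ≤ a) :
    eLpNorm (fun z : E × E => 1 + ‖z.1‖ + ‖z.2‖) q π ≤ 1 + 2 * a := by
  rw [← eLpNorm_comp_measurePreserving measurable_id.aestronglyMeasurable h₁] at hμ
  rw [← eLpNorm_comp_measurePreserving measurable_id.aestronglyMeasurable h₂] at hν
  have eLpNorm_one : eLpNorm (fun _ : E × E => (1 : ℝ)) q π = 1 := by
    rw [eLpNorm_const _ (zero_lt_one.trans_le hq).ne' (NeZero.ne π), measure_univ,
      ENNReal.one_rpow, mul_one, enorm_one]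
  calc _ ≤ eLpNorm (fun _ => (1 : ℝ)) q π + eLpNorm (fun z => ‖z.1‖) q π +
        eLpNorm (fun z => ‖z.2‖) q π :=
        (eLpNorm_add_le (by fun_prop) measurable_snd.norm.aestronglyMeasurable hq).trans
          (by
            gcongr
            exact eLpNorm_add_le (by fun_prop) measurable_fst.norm.aestronglyMeasurable hq)
    _ ≤ 1 + a + a := by
        rw [eLpNorm_one, eLpNorm_norm, eLpNorm_norm]
        gcongr <;> assumption
    _ = _ := by rw [add_assoc, two_mul]

theorem eLpNorm_apply_fst_sub_apply_snd_le {φ : E → F} {K r q : ℝ} (hK : 0 ≤ K) (hr : 0 ≤ r)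
    (hq : 0 < q) (lip : ∀ x y, ‖φ x - φ y‖ ≤ K * (1 + ‖x‖ + ‖y‖) ^ r * ‖x - y‖) :
    eLpNorm (fun z => φ z.1 - φ z.2) (ENNReal.ofReal q) π ≤
      ENNReal.ofReal K *
        (eLpNorm (fun z : E × E => 1 + ‖z.1‖ + ‖z.2‖) (ENNReal.ofReal (q * (r + 1))) π ^ r *
          eLpNorm (fun z => z.1 - z.2) (ENNReal.ofReal (q * (r + 1))) π) := by
  set A : E × E → ℝ := fun z => 1 + ‖z.1‖ + ‖z.2‖
  set p := q * (r + 1) with p_def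
  have hp : 0 < p := by positivity
  have pointwise (z : E × E) : ‖φ z.1 - φ z.2‖ₑ ^ q ≤ ENNReal.ofReal K ^ q *
      ((‖A z‖ₑ ^ p) ^ (r / (r + 1)) * (‖z.1 - z.2‖ₑ ^ p) ^ (1 / (r + 1))) := by
    refine (ENNReal.rpow_le_rpow (enorm_sub_le_of_lipschitz_growth hK hr lip z.1 z.2)
      hq.le).trans_eq ?_
    rw [ENNReal.mul_rpow_of_nonneg _ _ hq.le, ENNReal.mul_rpow_of_nonneg _ _ hq.le]
    simp only [← ENNReal.rpow_mul, A]
    congr 3 <;> rw [p_def] <;> field_simp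
  simp only [eLpNorm_ofReal_eq_lintegral hq, eLpNorm_ofReal_eq_lintegral hp]
  calc _ ≤ (ENNReal.ofReal K ^ q * ((∫⁻ z, ‖A z‖ₑ ^ p ∂π) ^ (r / (r + 1)) *
        (∫⁻ z, ‖z.1 - z.2‖ₑ ^ p ∂π) ^ (1 / (r + 1)))) ^ (1 / q) := by
        gcongr
        refine (lintegral_mono pointwise).trans ?_
        rw [lintegral_const_mul _ (by fun_prop)]
        gcongr
        exact ENNReal.lintegral_mul_norm_pow_le (by fun_prop) (by fun_prop) (by positivity)
          (by positivity) (by field_simp)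
    _ = _ := by
        rw [ENNReal.mul_rpow_of_nonneg _ _ (by positivity),
          ENNReal.mul_rpow_of_nonneg _ _ (by positivity)]
        simp only [← ENNReal.rpow_mul]
        rw [mul_one_div_cancel hq.ne', ENNReal.rpow_one]
        congr 3 <;> rw [p_def] <;> field_simp

/-- The cost `(∬ ‖x - y‖ ^ p dπ) ^ (1 / p)` of a transport plan `π`, whose infimum over couplings is
the Wasserstein-`p` distance; it is `0` when the integral is infinite. -/
def transportCost (p : ℝ) (π : Measure (E × E)) : ℝ :=
  (eLpNorm (fun z => z.1 - z.2) (ENNReal.ofReal p) π).toReal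

theorem norm_toLp_fst_sub_toLp_snd_le [IsProbabilityMeasure π] {φ : E → F} {K R p : ℝ}
    (hK : 0 ≤ K) (hR : 0 ≤ R) (hp : 2 ≤ p)
    (lip : ∀ x y, ‖φ x - φ y‖ ≤ K * (1 + ‖x‖ + ‖y‖) ^ (p / 2 - 1) * ‖x - y‖)
    (h₁ : MeasurePreserving Prod.fst π μ) (h₂ : MeasurePreserving Prod.snd π ν)
    (hμ : eLpNorm id (ENNReal.ofReal p) μ ≤ ENNReal.ofReal R)
    (hν : eLpNorm id (ENNReal.ofReal p) ν ≤ ENNReal.ofReal R)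
    (φ_memLp_μ : MemLp φ 2 μ) (φ_memLp_ν : MemLp φ 2 ν) :
    ‖(φ_memLp_μ.comp_measurePreserving h₁).toLp _ - (φ_memLp_ν.comp_measurePreserving h₂).toLp _‖ ≤
      K * (1 + 2 * R) ^ (p / 2 - 1) * transportCost p π := by
  have one_le_p : 1 ≤ ENNReal.ofReal p := ENNReal.one_le_ofReal.2 (by linarith)
  have hr : 0 ≤ p / 2 - 1 := by linarith
  have cost_ne_top : eLpNorm (fun z => z.1 - z.2) (ENNReal.ofReal p) π ≠ ⊤ :=
    ne_top_of_le_ne_top (ENNReal.mul_ne_top ENNReal.ofNat_ne_top ENNReal.ofReal_ne_top)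
      (eLpNorm_fst_sub_snd_le one_le_p h₁ h₂ hμ hν)
  have holder := eLpNorm_apply_fst_sub_apply_snd_le (π := π) hK hr two_pos lip
  rw [show 2 * (p / 2 - 1 + 1) = p by ring, ENNReal.ofReal_ofNat] at holder
  rw [← MemLp.toLp_sub, Lp.norm_toLp, transportCost, mul_assoc,
    ← ENNReal.toReal_ofReal (by positivity : 0 ≤ (1 + 2 * R) ^ (p / 2 - 1)),
    ← ENNReal.toReal_ofReal hK, ← ENNReal.toReal_mul, ← ENNReal.toReal_mul]
  refine ENNReal.toReal_mono (by finiteness) (holder.trans ?_)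
  rw [← ENNReal.ofReal_rpow_of_nonneg (by positivity) hr]
  gcongr
  refine (eLpNorm_one_add_norm_add_norm_le one_le_p h₁ h₂ hμ hν).trans_eq ?_
  rw [ENNReal.ofReal_add zero_le_one (by positivity), ENNReal.ofReal_mul zero_le_two,
    ENNReal.ofReal_one, ENNReal.ofReal_ofNat]

end Coupling

section WeightedCovariance

variable {d : ℕ} {β : ℝ} {f : Rd d → ℝ} {μ : Measure (Rd d)}

theorem inner_toLp_eq_integral_mul {Ω : Type*} [MeasurableSpace Ω] {P : Measure Ω} {φ ψ : Ω → ℝ}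
    (hφ : MemLp φ 2 P) (hψ : MemLp ψ 2 P) :
    inner ℝ (hφ.toLp φ) (hψ.toLp ψ) = ∫ x, φ x * ψ x ∂P := by
  rw [L2.inner_def]
  refine integral_congr_ae ?_
  filter_upwards [hφ.coeFn_toLp, hψ.coeFn_toLp] with x hφx hψx
  rw [hφx, hψx, RCLike.inner_apply', conj_trivial]

theorem wFn_eq_mul_self (x : Rd d) : wFn β f x = wFn (β / 2) f x * wFn (β / 2) f x := by
  rw [wFn, wFn, ← Real.exp_add]
  congr 1
  ring

theorem norm_toLp_sq_eq_integral_wFn (hH : MemLp (wFn (β / 2) f) 2 μ) :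
    ‖hH.toLp _‖ ^ 2 = ∫ x, wFn β f x ∂μ := by
  rw [← real_inner_self_eq_norm_sq, inner_toLp_eq_integral_mul]
  exact integral_congr_ae (.of_forall fun x => (wFn_eq_mul_self x).symm)

theorem wMean_apply_eq (hH : MemLp (wFn (β / 2) f) 2 μ)
    (hG : ∀ i, MemLp (fun x => wFn (β / 2) f x * x i) 2 μ) (i : Fin d) :
    wMean β f μ i = inner ℝ (hH.toLp _) ((hG i).toLp _) / ‖hH.toLp _‖ ^ 2 := by
  have integrand (j : Fin d) (x : Rd d) :
      (wFn β f x • x) j = wFn (β / 2) f x * (wFn (β / 2) f x * x j) := by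
    rw [PiLp.smul_apply, smul_eq_mul, wFn_eq_mul_self, mul_assoc]
  rw [wMean, PiLp.smul_apply, smul_eq_mul, norm_toLp_sq_eq_integral_wFn, eval_integral_piLp]
  · simp only [integrand, inner_toLp_eq_integral_mul, inv_mul_eq_div]
  · intro j
    simp only [integrand]
    exact hH.integrable_mul (hG j)

theorem wCov_eq_gram (hH : MemLp (wFn (β / 2) f) 2 μ)
    (hG : ∀ i, MemLp (fun x => wFn (β / 2) f x * x i) 2 μ) :
    wCov β f μ = Matrix.gram ℝ fun i => standardizedResidual (hH.toLp _) ((hG i).toLp _) := by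
  have centered (i : Fin d) : (hG i).toLp _ - wMean β f μ i • hH.toLp _ =
      ((hG i).sub (hH.const_smul (wMean β f μ i))).toLp _ := by
    rw [MemLp.toLp_sub (hG i) (hH.const_smul _), MemLp.toLp_const_smul _ hH]
  ext i j
  rw [Matrix.gram_apply, standardizedResidual_eq, standardizedResidual_eq, ← wMean_apply_eq hH hG,
    ← wMean_apply_eq hH hG, centered, centered, real_inner_smul_left, real_inner_smul_right,
    inner_toLp_eq_integral_mul, ← mul_assoc, ← mul_inv, ← sq, norm_toLp_sq_eq_integral_wFn, wCov]
  congr 2 with x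
  simp only [Pi.sub_apply, Pi.smul_apply, smul_eq_mul, wFn_eq_mul_self (β := β) x]
  ring

theorem wCov_eq_gram_comp {Ω : Type*} [MeasurableSpace Ω] {P : Measure Ω} {T : Ω → Rd d}
    (hT : MeasurePreserving T P μ) (hH : MemLp (wFn (β / 2) f) 2 μ)
    (hG : ∀ i, MemLp (fun x => wFn (β / 2) f x * x i) 2 μ) :
    wCov β f μ = Matrix.gram ℝ fun i =>
      standardizedResidual ((hH.comp_measurePreserving hT).toLp _)
        (((hG i).comp_measurePreserving hT).toLp _) := by
  let Φ : Lp ℝ 2 μ →ₗᵢ[ℝ] Lp ℝ 2 P := Lp.compMeasurePreservingₗᵢ ℝ T hT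
  rw [wCov_eq_gram hH hG]
  ext i j
  rw [Matrix.gram_apply, Matrix.gram_apply, ← Φ.inner_map_map, map_standardizedResidual,
    map_standardizedResidual]
  rfl

end WeightedCovariance

section MomentBounds

theorem MomLE.eLpNorm_id_le {d : ℕ} {p R : ℝ} {μ : Measure (Rd d)} (h : MomLE p R μ) (hp : 0 < p)
    (hR : 0 ≤ R) : eLpNorm id (ENNReal.ofReal p) μ ≤ ENNReal.ofReal R := by
  rw [eLpNorm_ofReal_eq_lintegral hp, one_div, ENNReal.rpow_inv_le_iff hp,
    ENNReal.ofReal_rpow_of_nonneg hR hp.le]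
  exact h

theorem memLp_of_continuous_of_norm_le {E F : Type*} [TopologicalSpace E] [MeasurableSpace E]
    [OpensMeasurableSpace E] [SecondCountableTopology E] [NormedAddCommGroup F] {φ : E → F}
    {M : ℝ} (cont : Continuous φ) (bounded : ∀ x, ‖φ x‖ ≤ M) {q : ℝ≥0∞} (μ : Measure E)
    [IsFiniteMeasure μ] : MemLp φ q μ :=
  .of_bound cont.aestronglyMeasurable M (.of_forall bounded)

theorem eLpNorm_mul_apply_le {d : ℕ} {φ : Rd d → ℝ} {M R : ℝ} {q : ℝ≥0∞} {μ : Measure (Rd d)}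
    (bounded : ∀ x, |φ x| ≤ M) (hμ : eLpNorm id q μ ≤ ENNReal.ofReal R) (i : Fin d) :
    eLpNorm (fun x => φ x * x i) q μ ≤ ENNReal.ofReal (M * R) := by
  have hM : 0 ≤ M := (abs_nonneg _).trans (bounded 0)
  rw [ENNReal.ofReal_mul hM]
  refine (eLpNorm_le_mul_eLpNorm_of_ae_le_mul (.of_forall fun x => ?_) q).trans
    (mul_le_mul_right hμ _)
  rw [norm_mul]
  exact mul_le_mul (bounded x) (PiLp.norm_apply_le x i) (norm_nonneg _) hM

theorem exists_memLp_mul_apply {d : ℕ} {φ : Rd d → ℝ} {M R : ℝ} {p q : ℝ≥0∞} {μ : Measure (Rd d)}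
    [IsProbabilityMeasure μ] (hqp : q ≤ p) (hR : 0 ≤ R) (meas : AEStronglyMeasurable φ μ)
    (bounded : ∀ x, |φ x| ≤ M) (hμ : eLpNorm id p μ ≤ ENNReal.ofReal R) :
    ∃ hG : ∀ i, MemLp (fun x => φ x * x i) q μ, ∀ i, ‖(hG i).toLp _‖ ≤ M * R := by
  have hM : 0 ≤ M := (abs_nonneg _).trans (bounded 0)
  have upper (i : Fin d) : eLpNorm (fun x => φ x * x i) q μ ≤ ENNReal.ofReal (M * R) :=
    eLpNorm_mul_apply_le bounded
      ((eLpNorm_le_eLpNorm_of_exponent_le hqp (by fun_prop)).trans hμ) i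
  have hG (i : Fin d) : MemLp (fun x => φ x * x i) q μ :=
    ⟨by fun_prop, (upper i).trans_lt ENNReal.ofReal_lt_top⟩
  refine ⟨hG, fun i => ?_⟩
  rw [Lp.norm_toLp]
  exact ENNReal.toReal_le_of_le_ofReal (by positivity) (upper i)

theorem norm_toLp_comp {Ω Ω' F : Type*} [MeasurableSpace Ω] [MeasurableSpace Ω']
    [NormedAddCommGroup F] {P : Measure Ω} {μ : Measure Ω'} {T : Ω → Ω'} {φ : Ω' → F} {q : ℝ≥0∞}
    (hφ : MemLp φ q μ) (hT : MeasurePreserving T P μ) :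
    ‖(hφ.comp_measurePreserving hT).toLp _‖ = ‖hφ.toLp φ‖ := by
  rw [Lp.norm_toLp, Lp.norm_toLp, eLpNorm_comp_measurePreserving hφ.aestronglyMeasurable hT]

theorem measure_closedBall_ge_half {E : Type*} [NormedAddCommGroup E] [MeasurableSpace E]
    [OpensMeasurableSpace E] {μ : Measure E} [IsProbabilityMeasure μ] {R : ℝ} (hR : 0 < R)
    (hμ : eLpNorm id 1 μ ≤ ENNReal.ofReal R) : 1 / 2 ≤ μ (Metric.closedBall 0 (2 * R)) := by
  have markov : ENNReal.ofReal R * (μ (Metric.closedBall 0 (2 * R))ᶜ * 2) ≤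
      ENNReal.ofReal R * 1 :=
    calc ENNReal.ofReal R * (μ (Metric.closedBall 0 (2 * R))ᶜ * 2)
        = ENNReal.ofReal (2 * R) * μ (Metric.closedBall 0 (2 * R))ᶜ := by
          rw [ENNReal.ofReal_mul zero_le_two, ENNReal.ofReal_ofNat]
          ring
      _ ≤ ENNReal.ofReal (2 * R) * μ {x : E | ENNReal.ofReal (2 * R) ≤ ‖id x‖ₑ} := by
          gcongr
          intro x hx
          rw [Set.mem_compl_iff, mem_closedBall_zero_iff, not_le] at hx
          rw [Set.mem_ofPred_eq, ← ofReal_norm]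
          exact ENNReal.ofReal_le_ofReal hx.le
      _ ≤ eLpNorm id 1 μ := by
          rw [eLpNorm_one_eq_lintegral_enorm]
          exact mul_meas_ge_le_lintegral₀ measurable_id.enorm.aemeasurable _
      _ ≤ ENNReal.ofReal R * 1 := by rwa [mul_one]
  have compl_le_half : μ (Metric.closedBall 0 (2 * R))ᶜ ≤ 1 / 2 := by
    rw [ENNReal.le_div_iff_mul_le (.inl two_ne_zero) (.inl ENNReal.ofNat_ne_top)]
    have ofReal_R_ne_zero : ENNReal.ofReal R ≠ 0 := (ENNReal.ofReal_pos.2 hR).ne'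
    exact (ENNReal.mul_le_mul_iff_right ofReal_R_ne_zero ENNReal.ofReal_ne_top).1 markov
  rw [← compl_compl (Metric.closedBall 0 (2 * R)),
    prob_compl_eq_one_sub measurableSet_closedBall.compl, ← ENNReal.sub_half ENNReal.one_ne_top]
  exact tsub_le_tsub_left compl_le_half 1

theorem exists_pos_forall_le_eLpNorm_one {E F : Type*} [NormedAddCommGroup E] [ProperSpace E]
    [MeasurableSpace E] [BorelSpace E] [NormedAddCommGroup F] {φ : E → F} (cont : Continuous φ)
    (ne_zero : ∀ x, φ x ≠ 0) {R : ℝ} (hR : 0 < R) :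
    ∃ c > 0, ∀ μ : Measure E, IsProbabilityMeasure μ → eLpNorm id 1 μ ≤ ENNReal.ofReal R →
      ENNReal.ofReal c ≤ eLpNorm φ 1 μ := by
  obtain ⟨x₀, -, is_min⟩ := (isCompact_closedBall (0 : E) (2 * R)).exists_isMinOn
    (Metric.nonempty_closedBall.2 (by positivity)) cont.norm.continuousOn
  refine ⟨‖φ x₀‖ / 2, half_pos (norm_pos_iff.2 (ne_zero x₀)), fun μ _ hμ => ?_⟩
  calc ENNReal.ofReal (‖φ x₀‖ / 2) = ‖φ x₀‖ₑ * (1 / 2) := by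
        rw [div_eq_mul_one_div, ENNReal.ofReal_mul (norm_nonneg _), ofReal_norm,
          ENNReal.ofReal_div_of_pos two_pos, ENNReal.ofReal_one, ENNReal.ofReal_ofNat]
    _ ≤ ‖φ x₀‖ₑ * μ (Metric.closedBall 0 (2 * R)) := by
        gcongr
        exact measure_closedBall_ge_half hR hμ
    _ = ∫⁻ _ in Metric.closedBall 0 (2 * R), ‖φ x₀‖ₑ ∂μ := (setLIntegral_const _ _).symm
    _ ≤ ∫⁻ x in Metric.closedBall 0 (2 * R), ‖φ x‖ₑ ∂μ :=
        setLIntegral_mono' measurableSet_closedBall fun x hx => by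
          rw [enorm_le_iff_norm_le]; exact is_min hx
    _ ≤ eLpNorm φ 1 μ := by
        rw [eLpNorm_one_eq_lintegral_enorm]
        exact setLIntegral_le_lintegral _ _

theorem exists_pos_forall_le_norm_toLp {E F : Type*} [NormedAddCommGroup E] [ProperSpace E]
    [MeasurableSpace E] [BorelSpace E] [NormedAddCommGroup F] {φ : E → F} (cont : Continuous φ)
    (ne_zero : ∀ x, φ x ≠ 0) {R : ℝ} (hR : 0 < R) {p q : ℝ≥0∞} (hp : 1 ≤ p) (hq : 1 ≤ q) :
    ∃ c > 0, ∀ μ : Measure E, IsProbabilityMeasure μ → eLpNorm id p μ ≤ ENNReal.ofReal R →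
      ∀ hφ : MemLp φ q μ, c ≤ ‖hφ.toLp φ‖ := by
  obtain ⟨c, hc, lower⟩ := exists_pos_forall_le_eLpNorm_one cont ne_zero hR
  refine ⟨c, hc, fun μ hμ moment hφ => ?_⟩
  rw [Lp.norm_toLp]
  refine (ENNReal.ofReal_le_iff_le_toReal hφ.eLpNorm_ne_top).1 ?_
  exact (lower μ hμ ((eLpNorm_le_eLpNorm_of_exponent_le hp (by fun_prop)).trans moment)).trans
    (eLpNorm_le_eLpNorm_of_exponent_le hq hφ.aestronglyMeasurable)

end MomentBounds

section Stability

variable {d : ℕ} {β p R M c : ℝ} {f : Rd d → ℝ} {μ ν : Measure (Rd d)}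

theorem le_Wp [IsProbabilityMeasure μ] [IsProbabilityMeasure ν] {a : ℝ} (hp : 1 ≤ p) (hR : 0 ≤ R)
    (hμ : MomLE p R μ) (hν : MomLE p R ν)
    (h : ∀ π : Measure (Rd d × Rd d), MeasurePreserving Prod.fst π μ →
      MeasurePreserving Prod.snd π ν → a ≤ transportCost p π) : a ≤ Wp p μ ν := by
  have hp0 : 0 < p := by linarith
  rw [Wp, ENNReal.toReal_sInf]
  · refine le_csInf (.image _ ⟨_, μ.prod ν, measurePreserving_fst.map_eq,
      measurePreserving_snd.map_eq, rfl⟩) ?_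
    rintro _ ⟨_, ⟨π, h₁, h₂, rfl⟩, rfl⟩
    refine (h π ⟨measurable_fst, h₁⟩ ⟨measurable_snd, h₂⟩).trans_eq ?_
    rw [transportCost, eLpNorm_ofReal_eq_lintegral hp0]
    rfl
  · rintro _ ⟨π, h₁, h₂, rfl⟩
    have cost_le := eLpNorm_fst_sub_snd_le (ENNReal.one_le_ofReal.2 hp) ⟨measurable_fst, h₁⟩
      ⟨measurable_snd, h₂⟩ (hμ.eLpNorm_id_le hp0 hR) (hν.eLpNorm_id_le hp0 hR)
    rw [eLpNorm_ofReal_eq_lintegral hp0] at cost_le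
    exact ne_top_of_le_ne_top (by finiteness) cost_le

theorem frobNorm_sub_le_of_gram_standardizedResidual {V : Type*} [NormedAddCommGroup V]
    [InnerProductSpace ℝ V] {H₁ H₂ : V} {G₁ G₂ : Fin d → V} {b δ ε : ℝ} (hc : 0 < c)
    (hδ : 0 ≤ δ) (hb : 0 ≤ b) (h₁ : c ≤ ‖H₁‖) (h₂ : c ≤ ‖H₂‖) (hG₂ : ∀ i, ‖G₂ i‖ ≤ b)
    (hε : 0 ≤ ε) (hH : ‖H₁ - H₂‖ ≤ δ) (hG : ∀ i, ‖G₁ i - G₂ i‖ ≤ ε)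
    {S₁ S₂ : Matrix (Fin d) (Fin d) ℝ}
    (hS₁ : IsPSDSqrt S₁ (Matrix.gram ℝ fun i => standardizedResidual H₁ (G₁ i)))
    (hS₂ : IsPSDSqrt S₂ (Matrix.gram ℝ fun i => standardizedResidual H₂ (G₂ i))) :
    frobNorm (S₁ - S₂) ≤ √(2 * d) * (c⁻¹ * (ε + 5 * (b / c) * δ)) := by
  refine frobNorm_sub_le_of_mul_self_eq_gram hS₁.1 hS₂.1 hS₁.2 hS₂.2 (by positivity) fun i => ?_
  refine (norm_standardizedResidual_sub_le hc h₁ h₂ (G₁ i) (hG₂ i)).trans ?_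
  gcongr
  exact hG i

theorem frobNorm_sub_le_mul_transportCost {π : Measure (Rd d × Rd d)} {K₁ K₂ : ℝ}
    [IsProbabilityMeasure μ] [IsProbabilityMeasure ν] [IsProbabilityMeasure π] (hp : 2 ≤ p)
    (hR : 0 ≤ R) (hc : 0 < c) (hK₁ : 0 ≤ K₁) (hK₂ : 0 ≤ K₂) (bounded : ∀ x, |wFn (β / 2) f x| ≤ M)
    (lip : ∀ x y, ‖wFn (β / 2) f x - wFn (β / 2) f y‖ ≤
      K₁ * (1 + ‖x‖ + ‖y‖) ^ (p / 2 - 1) * ‖x - y‖)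
    (lip_smul : ∀ x y, ‖wFn (β / 2) f x • x - wFn (β / 2) f y • y‖ ≤
      K₂ * (1 + ‖x‖ + ‖y‖) ^ (p / 2 - 1) * ‖x - y‖)
    (h₁ : MeasurePreserving Prod.fst π μ) (h₂ : MeasurePreserving Prod.snd π ν)
    (hμ : eLpNorm id (ENNReal.ofReal p) μ ≤ ENNReal.ofReal R)
    (hν : eLpNorm id (ENNReal.ofReal p) ν ≤ ENNReal.ofReal R)
    (hHμ : MemLp (wFn (β / 2) f) 2 μ) (hHν : MemLp (wFn (β / 2) f) 2 ν)
    (lower_μ : c ≤ ‖hHμ.toLp _‖) (lower_ν : c ≤ ‖hHν.toLp _‖) {Sμ Sν : Matrix (Fin d) (Fin d) ℝ}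
    (hSμ : IsPSDSqrt Sμ (wCov β f μ)) (hSν : IsPSDSqrt Sν (wCov β f ν)) :
    frobNorm (Sμ - Sν) ≤ √(2 * d) * (c⁻¹ * (K₂ * (1 + 2 * R) ^ (p / 2 - 1) +
      5 * (M * R / c) * (K₁ * (1 + 2 * R) ^ (p / 2 - 1)))) * transportCost p π := by
  have hM : 0 ≤ M := (abs_nonneg _).trans (bounded 0)
  have hp' : 2 ≤ ENNReal.ofReal p := ENNReal.ofNat_le_ofReal.2 hp
  have cost_nonneg : 0 ≤ transportCost p π := ENNReal.toReal_nonneg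
  obtain ⟨hGμ, -⟩ := exists_memLp_mul_apply hp' hR hHμ.aestronglyMeasurable bounded hμ
  obtain ⟨hGν, upper⟩ := exists_memLp_mul_apply hp' hR hHν.aestronglyMeasurable bounded hν
  rw [wCov_eq_gram_comp h₁ hHμ hGμ] at hSμ
  rw [wCov_eq_gram_comp h₂ hHν hGν] at hSν
  refine (frobNorm_sub_le_of_gram_standardizedResidual (b := M * R) hc (by positivity)
    (by positivity) ?_ ?_ (fun i => ?_) (by positivity)
    (norm_toLp_fst_sub_toLp_snd_le hK₁ hR hp lip h₁ h₂ hμ hν hHμ hHν)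
    (fun i => norm_toLp_fst_sub_toLp_snd_le hK₂ hR hp (fun x y => ?_) h₁ h₂ hμ hν (hGμ i)
      (hGν i)) hSμ hSν).trans_eq (by ring)
  · exact lower_μ.trans_eq (norm_toLp_comp hHμ h₁).symm
  · exact lower_ν.trans_eq (norm_toLp_comp hHν h₂).symm
  · exact (norm_toLp_comp (hGν i) h₂).trans_le (upper i)
  · exact (PiLp.norm_apply_le (wFn (β / 2) f x • x - wFn (β / 2) f y • y) i).trans (lip_smul x y)

theorem exists_frobNorm_sub_le_mul_transportCost (hp : 2 ≤ p) (hR : 0 < R)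
    (bounded : ∀ x, |wFn (β / 2) f x| ≤ M) (lip : HasLipschitzGrowth (p / 2 - 1) (wFn (β / 2) f))
    (lip_smul : HasLipschitzGrowth (p / 2 - 1) fun x => wFn (β / 2) f x • x) :
    ∃ L ≥ 0, ∀ μ ν : Measure (Rd d), IsProbabilityMeasure μ → IsProbabilityMeasure ν →
      MomLE p R μ → MomLE p R ν → ∀ Sμ Sν : Matrix (Fin d) (Fin d) ℝ,
        IsPSDSqrt Sμ (wCov β f μ) → IsPSDSqrt Sν (wCov β f ν) →
        ∀ π : Measure (Rd d × Rd d), MeasurePreserving Prod.fst π μ →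
          MeasurePreserving Prod.snd π ν → frobNorm (Sμ - Sν) ≤ L * transportCost p π := by
  have cont := lip.continuous
  have hM : 0 ≤ M := (abs_nonneg _).trans (bounded 0)
  obtain ⟨c, hc, lower⟩ := exists_pos_forall_le_norm_toLp cont (fun x => (Real.exp_pos _).ne') hR
    (ENNReal.one_le_ofReal.2 (one_le_two.trans hp)) one_le_two
  obtain ⟨K₁, hK₁, lip⟩ := lip
  obtain ⟨K₂, hK₂, lip_smul⟩ := lip_smul
  refine ⟨√(2 * d) * (c⁻¹ * (K₂ * (1 + 2 * R) ^ (p / 2 - 1) +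
    5 * (M * R / c) * (K₁ * (1 + 2 * R) ^ (p / 2 - 1)))), by positivity, ?_⟩
  intro μ ν _ _ hμ hν Sμ Sν hSμ hSν π h₁ h₂
  have : IsProbabilityMeasure (π.map Prod.fst) := by rwa [h₁.map_eq]
  have : IsProbabilityMeasure π := Measure.isProbabilityMeasure_of_map Prod.fst
  replace hμ := hμ.eLpNorm_id_le (by linarith) hR.le
  replace hν := hν.eLpNorm_id_le (by linarith) hR.le
  have hHμ := memLp_of_continuous_of_norm_le (q := 2) cont bounded μ
  have hHν := memLp_of_continuous_of_norm_le (q := 2) cont bounded ν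
  exact frobNorm_sub_le_mul_transportCost hp hR.le hc hK₁ hK₂ bounded lip lip_smul h₁ h₂ hμ hν
    hHμ hHν (lower μ ‹_› hμ hHμ) (lower ν ‹_› hν hHν) hSμ hSν

end Stability

section Main

variable {d : ℕ} {β s ℓ c C p : ℝ} {f : Rd d → ℝ}

theorem wFn_half_eq_exp_neg : wFn (β / 2) f = fun x => Real.exp (-(β / 2 * f x)) := by
  funext x
  rw [wFn, neg_mul]

theorem one_le_pM (hs : 0 ≤ s) : 1 ≤ pM s ℓ := by
  unfold pM
  split_ifs <;> linarith

theorem exists_bounded_hasLipschitzGrowth_wFn_half (hβ : 0 < β) (hs : 0 ≤ s) (hℓ : 0 ≤ ℓ)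
    (lip : HasLipschitzGrowth s f) (hc : 0 < c) (coercive : ∀ x, c * ‖x‖ ^ ℓ - C ≤ f x)
    (hp : 2 * pM s ℓ ≤ p) :
    ∃ M, (∀ x, |wFn (β / 2) f x| ≤ M) ∧ HasLipschitzGrowth (p / 2 - 1) (wFn (β / 2) f) ∧
      HasLipschitzGrowth (p / 2 - 1) fun x => wFn (β / 2) f x • x := by
  rw [wFn_half_eq_exp_neg]
  have scaled (x : Rd d) : β / 2 * c * ‖x‖ ^ ℓ - β / 2 * C ≤ β / 2 * f x := by
    rw [mul_assoc, ← mul_sub]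
    gcongr
    exact coercive x
  have bounded (x : Rd d) : |Real.exp (-(β / 2 * f x))| ≤ Real.exp (β / 2 * C) := by
    rw [Real.abs_exp]
    exact exp_neg_le_of_coercive (by positivity) scaled x
  have weighted := exists_one_add_norm_mul_abs_exp_neg_sub_le hs hℓ (by positivity)
    (lip.const_mul (β / 2)) scaled
  have exponent_le : pM s ℓ - 1 ≤ p / 2 - 1 := by linarith
  exact ⟨_, bounded, (hasLipschitzGrowth_of_one_add_norm_mul_le weighted).mono exponent_le,
    (hasLipschitzGrowth_smul_of_one_add_norm_mul_le (sub_nonneg.2 (one_le_pM hs)) bounded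
      weighted).mono exponent_le⟩

theorem sqrt_weighted_cov_stability_general (hβ : 0 < β) (hs : 0 ≤ s) (hℓ : 0 ≤ ℓ)
    (lip : HasLipschitzGrowth s f) (hc : 0 < c) (coercive : ∀ x, c * ‖x‖ ^ ℓ - C ≤ f x)
    {R : ℝ} (hR : 0 < R) (hp : 2 * pM s ℓ ≤ p) :
    ∃ L > 0, ∀ μ ν : Measure (Rd d), IsProbabilityMeasure μ → IsProbabilityMeasure ν →
      MomLE p R μ → MomLE p R ν → ∀ Sμ Sν : Matrix (Fin d) (Fin d) ℝ,
        IsPSDSqrt Sμ (wCov β f μ) → IsPSDSqrt Sν (wCov β f ν) →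
        frobNorm (Sμ - Sν) ≤ L * Wp p μ ν := by
  have two_le_p : 2 ≤ p := by linarith [one_le_pM (ℓ := ℓ) hs]
  obtain ⟨M, bounded, lip_wFn, lip_smul⟩ :=
    exists_bounded_hasLipschitzGrowth_wFn_half hβ hs hℓ lip hc coercive hp
  obtain ⟨L, hL, le_cost⟩ :=
    exists_frobNorm_sub_le_mul_transportCost two_le_p hR bounded lip_wFn lip_smul
  have hL' : 0 < L + 1 := by positivity
  refine ⟨L + 1, hL', fun μ ν _ _ hμ hν Sμ Sν hSμ hSν => (div_le_iff₀' hL').1 ?_⟩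
  refine le_Wp (by linarith) hR.le hμ hν fun π h₁ h₂ => (div_le_iff₀' hL').2 ?_
  refine (le_cost μ ν ‹_› ‹_› hμ hν Sμ Sν hSμ hSν π h₁ h₂).trans ?_
  exact mul_le_mul_of_nonneg_right (by linarith) ENNReal.toReal_nonneg

end Main

/-- **Basic Wasserstein stability estimate for the square root of the weighted covariance.**
If `f ∈ A(s, ℓ, u)`, then for every `R > 0` and `p ≥ 2 p_M(s, ℓ)` there is `L > 0`
such that `‖√C_β(μ) - √C_β(ν)‖_F ≤ L ⬝ W_p(μ, ν)` for all `μ, ν ∈ P_{p,R}(ℝ^d)`. -/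
theorem sqrt_weighted_cov_stability
    (β : ℝ) (hβ : 0 < β) (d : ℕ) (hd : 1 ≤ d)
    (s ℓ u : ℝ) (hs : 0 ≤ s) (hℓ : 0 ≤ ℓ) (hℓu : ℓ ≤ u)
    (f : Rd d → ℝ) (hf : ClassA s ℓ u f)
    (R : ℝ) (hR : 0 < R) (p : ℝ) (hp : 2 * pM s ℓ ≤ p) :
    ∃ L > 0, ∀ μ ν : Measure (Rd d),
      IsProbabilityMeasure μ → IsProbabilityMeasure ν →
      MomLE p R μ → MomLE p R ν →
      ∀ Sμ Sν : Matrix (Fin d) (Fin d) ℝ,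
        IsPSDSqrt Sμ (wCov β f μ) → IsPSDSqrt Sν (wCov β f ν) →
        frobNorm (Sμ - Sν) ≤ L * Wp p μ ν := by
  obtain ⟨_, hLf, lip⟩ := hf.lip
  obtain ⟨_, hcl, Cl, -, growth_lower⟩ := hf.growth_lower
  exact sqrt_weighted_cov_stability_general hβ hs hℓ ⟨_, hLf.le, lip⟩ hcl
    (C := Cl - fStar f) (fun x => by linarith [growth_lower x]) hR hp

end
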